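/- For γ > 2, let W_γ : SL(2) → ℝ, W_γ(F) = ‖F‖⁴ − 2γ·‖F‖². Then its rank-one convex and convex envelopes on SL(2) coincide and are given by: RW_γ(F) = CW_γ(F) = W_γ(F) if ‖F‖² ≥ γ, and RW_γ(F) = CW_γ(F) = −γ² if ‖F‖² < γ, for all F ∈ SL(2). Equivalently, at the scalar level, the convex envelope of φ̃(t) = t⁴ + (4−2γ)t² + 4 − 4γ is C φ̃(t) = φ̃(t) for t² ≥ γ − 2 and C φ̃(t) = −γ² for t² < γ − 2. -/

import Mathlib

/-!
Completing the square gives `W_γ = (‖F‖² - γ)² - γ²` and `φ̃(t) = (t² + 2 - γ)² - γ²`. For convex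
`n`, the function `max (n - γ) 0 ^ 2 - γ ^ 2` (`flattened`) is convex and lies below
`(n - γ) ^ 2 - γ ^ 2`, with equality where `n ≥ γ`; with `n = ‖F‖²` or `n = t² + 2`, this
minorant attains the claimed envelope.

It is optimal because a point with `n < γ` lies on a segment whose endpoints satisfy `n = γ`,
where the energy is `-γ²`. In the scalar case the endpoints are `±√(γ - 2)`. On SL(2) the segment
consists of the shears `F (I + t e₁ ⊗ e₂)`: the determinant is constant along it, the direction has
rank one, and `‖·‖²` is a quadratic polynomial in `t` with positive leading coefficient
(`exists_shear_segment`). As convex functions are rank-one convex, the same upper bound serves both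
envelopes.
-/

/-- The squared Frobenius norm of a real 2×2 matrix. -/
noncomputable def frobSq (F : Matrix (Fin 2) (Fin 2) ℝ) : ℝ := ∑ i, ∑ j, (F i j) ^ 2

/-- Rank-one convexity of a function on SL(2). -/
def RankOneConvexOnSL2 (w : Matrix (Fin 2) (Fin 2) ℝ → ℝ) : Prop :=
  ∀ F H : Matrix (Fin 2) (Fin 2) ℝ, H.rank = 1 → F.det = 1 → (F + H).det = 1 →
    ∀ t ∈ Set.Icc (0 : ℝ) 1, w (F + t • H) ≤ (1 - t) * w F + t * w (F + H)

/-- The rank-one convex envelope of `W : SL(2) → ℝ`. -/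
noncomputable def rankOneConvexEnvelopeSL2 (W : Matrix (Fin 2) (Fin 2) ℝ → ℝ)
    (F : Matrix (Fin 2) (Fin 2) ℝ) : ℝ :=
  sSup {y : ℝ | ∃ w : Matrix (Fin 2) (Fin 2) ℝ → ℝ, RankOneConvexOnSL2 w ∧
    (∀ X : Matrix (Fin 2) (Fin 2) ℝ, X.det = 1 → w X ≤ W X) ∧ y = w F}

/-- The convex envelope of `W : SL(2) → ℝ` (convex minorants on `ℝ^{2×2}`,
constrained only on SL(2)). -/
noncomputable def convexEnvelopeSL2 (W : Matrix (Fin 2) (Fin 2) ℝ → ℝ)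
    (F : Matrix (Fin 2) (Fin 2) ℝ) : ℝ :=
  sSup {y : ℝ | ∃ w : Matrix (Fin 2) (Fin 2) ℝ → ℝ, ConvexOn ℝ Set.univ w ∧
    (∀ X : Matrix (Fin 2) (Fin 2) ℝ, X.det = 1 → w X ≤ W X) ∧ y = w F}

/-- The convex envelope of `f : ℝ → ℝ`: the pointwise supremum of all convex minorants. -/
noncomputable def convexEnvelope (f : ℝ → ℝ) (t : ℝ) : ℝ :=
  sSup {y : ℝ | ∃ p : ℝ → ℝ, ConvexOn ℝ Set.univ p ∧ (∀ s : ℝ, p s ≤ f s) ∧ y = p t}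

/-- The quadratic well `(n - γ)² - γ²` with its region `n < γ` replaced by the value `-γ²`. -/
noncomputable def flattened {E : Type*} (γ : ℝ) (n : E → ℝ) (x : E) : ℝ :=
  max (n x - γ) 0 ^ 2 - γ ^ 2

lemma convexOn_flattened {E : Type*} [AddCommGroup E] [Module ℝ E] (γ : ℝ) {n : E → ℝ}
    (hn : ConvexOn ℝ Set.univ n) : ConvexOn ℝ Set.univ (flattened γ n) := by
  have h1 : ConvexOn ℝ Set.univ (fun x => n x - γ) := hn.sub (concaveOn_const γ convex_univ)
  have h2 := (h1.sup (convexOn_const (0 : ℝ) convex_univ)).pow (fun x _ => le_max_right _ _) 2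
  exact h2.sub (concaveOn_const (γ ^ 2) convex_univ)

lemma flattened_le {E : Type*} (γ : ℝ) (n : E → ℝ) (x : E) :
    flattened γ n x ≤ (n x - γ) ^ 2 - γ ^ 2 := by
  unfold flattened
  rcases max_cases (n x - γ) 0 with ⟨h, _⟩ | ⟨h, _⟩ <;> rw [h]
  nlinarith [sq_nonneg (n x - γ)]

lemma flattened_of_le {E : Type*} {γ : ℝ} {n : E → ℝ} {x : E} (h : γ ≤ n x) :
    flattened γ n x = (n x - γ) ^ 2 - γ ^ 2 := by
  rw [flattened, max_eq_left (by linarith)]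

lemma flattened_of_lt {E : Type*} {γ : ℝ} {n : E → ℝ} {x : E} (h : n x < γ) :
    flattened γ n x = -γ ^ 2 := by
  rw [flattened, max_eq_right (by linarith)]
  ring

lemma frobSq_eq (F : Matrix (Fin 2) (Fin 2) ℝ) :
    frobSq F = F 0 0 ^ 2 + F 0 1 ^ 2 + (F 1 0 ^ 2 + F 1 1 ^ 2) := by
  simp [frobSq, Fin.sum_univ_two]

lemma convexOn_frobSq : ConvexOn ℝ Set.univ frobSq := by
  have entry : ∀ i j : Fin 2,
      ConvexOn ℝ Set.univ (fun F : Matrix (Fin 2) (Fin 2) ℝ => F i j ^ 2) := fun i j =>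
    (even_two.convexOn_pow (𝕜 := ℝ)).comp_linearMap (Matrix.entryLinearMap ℝ ℝ i j)
  have h := ((entry 0 0).add (entry 0 1)).add ((entry 1 0).add (entry 1 1))
  refine h.congr fun F _ => ?_
  simp [frobSq_eq]

lemma convexOn_rankOneConvex {w : Matrix (Fin 2) (Fin 2) ℝ → ℝ} (hw : ConvexOn ℝ Set.univ w) :
    RankOneConvexOnSL2 w := by
  intro F H _ _ _ t ht
  have h := hw.2 (Set.mem_univ F) (Set.mem_univ (F + H)) (sub_nonneg.2 ht.2) ht.1 (by ring)
  have e : (1 - t) • F + t • (F + H) = F + t • H := by module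
  rw [e] at h
  simpa using h

/-- A quadratic polynomial with positive leading coefficient that is negative at `0` has roots on
both sides of `0`. -/
lemma exists_roots {a b c : ℝ} (ha : 0 < a) (hc : c < 0) :
    ∃ r s : ℝ, r < 0 ∧ 0 < s ∧ a * r ^ 2 + 2 * b * r + c = 0 ∧ a * s ^ 2 + 2 * b * s + c = 0 := by
  have hD : b ^ 2 < b ^ 2 - a * c := by nlinarith
  have hS : |b| < √(b ^ 2 - a * c) := by
    rw [← Real.sqrt_sq_eq_abs]
    exact Real.sqrt_lt_sqrt (sq_nonneg b) hD
  have hSS := Real.sq_sqrt (show 0 ≤ b ^ 2 - a * c by nlinarith [sq_nonneg b])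
  set S := √(b ^ 2 - a * c)
  obtain ⟨h1, h2⟩ := abs_lt.1 hS
  refine ⟨(-b - S) / a, (-b + S) / a, div_neg_of_neg_of_pos (by linarith) ha,
    div_pos (by linarith) ha, ?_, ?_⟩
  · field_simp
    linear_combination hSS
  · field_simp
    linear_combination hSS

/-- Every `F ∈ SL(2)` with `‖F‖² < γ` lies on a rank-one segment in SL(2) whose endpoints `G` and
`G + H` have squared norm `γ`. -/
lemma exists_shear_segment {γ : ℝ} {F : Matrix (Fin 2) (Fin 2) ℝ} (hF : F.det = 1)
    (hn : frobSq F < γ) :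
    ∃ (G H : Matrix (Fin 2) (Fin 2) ℝ) (t : ℝ), H.rank = 1 ∧ G.det = 1 ∧ (G + H).det = 1 ∧
      t ∈ Set.Icc (0 : ℝ) 1 ∧ G + t • H = F ∧ frobSq G = γ ∧ frobSq (G + H) = γ := by
  rw [Matrix.det_fin_two] at hF
  have ha : 0 < F 0 0 ^ 2 + F 1 0 ^ 2 := by
    by_contra h
    have h0 : F 0 0 = 0 := by nlinarith [sq_nonneg (F 0 0), sq_nonneg (F 1 0)]
    have h1 : F 1 0 = 0 := by nlinarith [sq_nonneg (F 0 0), sq_nonneg (F 1 0)]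
    simp [h0, h1] at hF
  -- The squared norm of `F (I + s e₁ ⊗ e₂)` minus `γ` is the quadratic polynomial below.
  obtain ⟨r, s, hr, hs, er, es⟩ := exists_roots
    (b := F 0 0 * F 0 1 + F 1 0 * F 1 1) ha (sub_neg.2 hn)
  rw [frobSq_eq] at er es
  have hne : s - r ≠ 0 := by linarith
  set K : Matrix (Fin 2) (Fin 2) ℝ := Matrix.vecMulVec ![F 0 0, F 1 0] ![0, 1] with hK
  have hsum : F + r • K + (s - r) • K = F + s • K := by module
  have hdet : ∀ u : ℝ, (F + u • K).det = 1 := by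
    intro u
    simp [Matrix.det_fin_two, hK]
    linear_combination hF
  have hnorm : ∀ u : ℝ, frobSq (F + u • K) = F 0 0 ^ 2 + (F 0 1 + u * F 0 0) ^ 2 +
      (F 1 0 ^ 2 + (F 1 1 + u * F 1 0) ^ 2) := by
    intro u
    simp [frobSq_eq, hK]
  refine ⟨F + r • K, (s - r) • K, -r / (s - r), ?_, hdet r, ?_, ⟨?_, ?_⟩, ?_, ?_, ?_⟩
  · apply le_antisymm
    · rw [hK, ← Matrix.smul_vecMulVec]
      exact Matrix.rank_vecMulVec_le _ _
    · rw [Nat.one_le_iff_ne_zero, Ne]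
      intro hrank
      have h : (s - r) • K = 0 := by
        rw [Matrix.rank, Submodule.finrank_eq_zero, LinearMap.range_eq_bot] at hrank
        exact Matrix.toLin'.injective (hrank.trans (map_zero Matrix.toLin').symm)
      have hK0 : K = 0 := (smul_eq_zero.1 h).resolve_left hne
      have h0 := congrFun (congrFun hK0 0) 1
      have h1 := congrFun (congrFun hK0 1) 1
      simp [hK] at h0 h1
      simp [h0, h1] at ha
  · rw [hsum]
    exact hdet s
  · exact div_nonneg (by linarith) (by linarith)
  · rw [div_le_one (by linarith)]
    linarith
  · rw [smul_smul, div_mul_cancel₀ _ hne]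
    module
  · rw [hnorm]
    linear_combination er
  · rw [hsum, hnorm]
    linear_combination es

lemma rankOneConvex_le_of_frobSq_lt {γ : ℝ} {w : Matrix (Fin 2) (Fin 2) ℝ → ℝ}
    (hw : RankOneConvexOnSL2 w)
    (hle : ∀ X : Matrix (Fin 2) (Fin 2) ℝ, X.det = 1 → w X ≤ (frobSq X) ^ 2 - 2 * γ * frobSq X)
    {F : Matrix (Fin 2) (Fin 2) ℝ} (hF : F.det = 1) (hn : frobSq F < γ) : w F ≤ -γ ^ 2 := by
  obtain ⟨G, H, t, hH, hG, hGH, ht, rfl, nG, nGH⟩ := exists_shear_segment hF hn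
  have h := hw G H hH hG hGH t ht
  have h1 := hle G hG
  have h2 := hle _ hGH
  rw [nG] at h1
  rw [nGH] at h2
  nlinarith [mul_le_mul_of_nonneg_left h1 (sub_nonneg.2 ht.2), mul_le_mul_of_nonneg_left h2 ht.1]

lemma flattened_frobSq_le (γ : ℝ) (X : Matrix (Fin 2) (Fin 2) ℝ) :
    flattened γ frobSq X ≤ (frobSq X) ^ 2 - 2 * γ * frobSq X := by
  linarith [flattened_le γ frobSq X]

lemma matrix_envelopes_eq {γ : ℝ} {F : Matrix (Fin 2) (Fin 2) ℝ} (hF : F.det = 1) :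
    rankOneConvexEnvelopeSL2 (fun X => (frobSq X) ^ 2 - 2 * γ * frobSq X) F =
        flattened γ frobSq F ∧
      convexEnvelopeSL2 (fun X => (frobSq X) ^ 2 - 2 * γ * frobSq X) F =
        flattened γ frobSq F := by
  have hconv := convexOn_flattened γ convexOn_frobSq
  have upper : ∀ w : Matrix (Fin 2) (Fin 2) ℝ → ℝ, RankOneConvexOnSL2 w →
      (∀ X : Matrix (Fin 2) (Fin 2) ℝ, X.det = 1 → w X ≤ (frobSq X) ^ 2 - 2 * γ * frobSq X) →
      w F ≤ flattened γ frobSq F := by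
    intro w hw hle
    rcases le_or_gt γ (frobSq F) with h | h
    · rw [flattened_of_le h]
      linarith [hle F hF]
    · rw [flattened_of_lt h]
      exact rankOneConvex_le_of_frobSq_lt hw hle hF h
  constructor
  · refine IsGreatest.csSup_eq ⟨⟨_, convexOn_rankOneConvex hconv,
      fun X _ => flattened_frobSq_le γ X, rfl⟩, ?_⟩
    rintro y ⟨w, hw, hle, rfl⟩
    exact upper w hw hle
  · refine IsGreatest.csSup_eq ⟨⟨_, hconv, fun X _ => flattened_frobSq_le γ X, rfl⟩, ?_⟩
    rintro y ⟨w, hw, hle, rfl⟩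
    exact upper w (convexOn_rankOneConvex hw) hle

lemma scalar_envelope_eq {γ : ℝ} (t : ℝ) :
    convexEnvelope (fun s => s ^ 4 + (4 - 2 * γ) * s ^ 2 + 4 - 4 * γ) t =
      flattened γ (fun s : ℝ => s ^ 2 + 2) t := by
  have hconv : ConvexOn ℝ Set.univ (flattened γ (fun s : ℝ => s ^ 2 + 2)) :=
    convexOn_flattened γ (even_two.convexOn_pow.add (convexOn_const (2 : ℝ) convex_univ))
  refine IsGreatest.csSup_eq ⟨⟨_, hconv, fun s => ?_, rfl⟩, ?_⟩
  · have h := flattened_le γ (fun s : ℝ => s ^ 2 + 2) s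
    show _ ≤ s ^ 4 + (4 - 2 * γ) * s ^ 2 + 4 - 4 * γ
    linarith
  · rintro y ⟨p, hp, hle, rfl⟩
    rcases le_or_gt γ (t ^ 2 + 2) with h | h
    · rw [flattened_of_le (n := fun s : ℝ => s ^ 2 + 2) h]
      linarith [hle t]
    · rw [flattened_of_lt (n := fun s : ℝ => s ^ 2 + 2) h]
      have hr := Real.sq_sqrt (show 0 ≤ γ - 2 by nlinarith [sq_nonneg t])
      set r := √(γ - 2)
      have hr4 : r ^ 4 = (γ - 2) ^ 2 := by rw [← hr]; ring
      have h1 := hle r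
      have h2 := hle (-r)
      dsimp only at h1 h2
      have htr : |t| ≤ r := Real.abs_le_sqrt (by linarith)
      have hseg : t ∈ segment ℝ (-r) r := by
        rw [segment_eq_Icc (by linarith [abs_nonneg t])]
        exact abs_le.1 htr
      refine (hp.le_on_segment (Set.mem_univ _) (Set.mem_univ _) hseg).trans (max_le ?_ ?_)
      · rw [Even.neg_pow (by decide : Even 4), neg_sq, hr4, hr] at h2
        linarith
      · rw [hr4, hr] at h1
        linarith

/-- The relaxation of the restricted Alibert–Dacorogna–Marcellini energy
`W_γ(F) = ‖F‖⁴ − 2γ‖F‖²` on SL(2) for `γ > 2`: the rank-one convex and convex envelopes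
coincide, being `W_γ(F)` for `‖F‖² ≥ γ` and `−γ²` for `‖F‖² < γ`; at the scalar level,
the convex envelope of `φ̃(t) = t⁴ + (4−2γ)t² + 4 − 4γ` is `φ̃(t)` for `t² ≥ γ − 2` and
`−γ²` for `t² < γ − 2`. -/
theorem ADM_envelopes (γ : ℝ) (hγ : 2 < γ) :
    (∀ F : Matrix (Fin 2) (Fin 2) ℝ, F.det = 1 →
      (γ ≤ frobSq F →
        rankOneConvexEnvelopeSL2 (fun X => (frobSq X) ^ 2 - 2 * γ * frobSq X) F =
          (frobSq F) ^ 2 - 2 * γ * frobSq F ∧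
        convexEnvelopeSL2 (fun X => (frobSq X) ^ 2 - 2 * γ * frobSq X) F =
          (frobSq F) ^ 2 - 2 * γ * frobSq F) ∧
      (frobSq F < γ →
        rankOneConvexEnvelopeSL2 (fun X => (frobSq X) ^ 2 - 2 * γ * frobSq X) F =
          -γ ^ 2 ∧
        convexEnvelopeSL2 (fun X => (frobSq X) ^ 2 - 2 * γ * frobSq X) F = -γ ^ 2)) ∧
    (∀ t : ℝ,
      (γ - 2 ≤ t ^ 2 →
        convexEnvelope (fun s => s ^ 4 + (4 - 2 * γ) * s ^ 2 + 4 - 4 * γ) t =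
          t ^ 4 + (4 - 2 * γ) * t ^ 2 + 4 - 4 * γ) ∧
      (t ^ 2 < γ - 2 →
        convexEnvelope (fun s => s ^ 4 + (4 - 2 * γ) * s ^ 2 + 4 - 4 * γ) t = -γ ^ 2)) := by
  refine ⟨fun F hF => ⟨fun h => ?_, fun h => ?_⟩, fun t => ⟨fun h => ?_, fun h => ?_⟩⟩
  · have e : (frobSq F) ^ 2 - 2 * γ * frobSq F = flattened γ frobSq F := by
      rw [flattened_of_le h]
      ring
    rw [e]
    exact matrix_envelopes_eq hF
  · rw [← flattened_of_lt h]
    exact matrix_envelopes_eq hF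
  · rw [scalar_envelope_eq, flattened_of_le (by linarith)]
    ring
  · rw [scalar_envelope_eq, flattened_of_lt (by linarith)]
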